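/- arXiv:1802.01558 — 2 statements merged into one kernel-verified Lean document; each statement's English description precedes it below -/
import Mathlib

section
/- Fix 1 ≤ i, j ≤ d with i ≠ j and let v : U_i × U_j → ℝ be summable. Let ζ(ω) = Σ_{x ∈ U_i} Σ_{y ∈ U_j} v(x,y) ω(i,x) ω(j,y), the series converging in L²(Ω, π). Then Sζ(ω) = Σ_{x ∈ U_i} Σ_{y ∈ U_j} v*(x,y) ω(i,x) ω(j,y) in L²(Ω, π), where v* : U_i × U_j → ℝ is the square-summable function whose Fourier transform satisfies v̂*(p,q) = −(1/2) d̂(p^{(i)} + q^{(j)}) v̂(p,q) for all p, q ∈ 𝕋^d. -/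
open MeasureTheory Real Filter Topology Finset

noncomputable section

namespace RWOML

/-- The `j`-th standard unit vector of `ℤ^d`. -/
def e (d : ℕ) (j : Fin d) : Fin d → ℤ := fun k => if k = j then 1 else 0

/-- The hyperplane `U_i = {x ∈ ℤ^d : x_i = 0}`. -/
abbrev U (d : ℕ) (i : Fin d) : Type := {x : Fin d → ℤ // x i = 0}

/-- The index set of the lines of `ℤ^d`: pairs `(i, x)` with `x ∈ U_i`. -/
abbrev Idx (d : ℕ) : Type := Σ i : Fin d, U d i

/-- The space `Ω` of orientations (`±1`-valued, coded as `ℤˣ`) of all lines. -/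
abbrev Env (d : ℕ) : Type := Idx d → ℤˣ

instance : MeasurableSpace ℤˣ := ⊤

/-- The coordinate `ω(i,x)` read as a real number (`±1`). -/
def chi {d : ℕ} (ω : Env d) {i : Fin d} (x : U d i) : ℝ := ((ω ⟨i, x⟩ : ℤ) : ℝ)

/-- The origin, as an element of `U_i`. -/
def o (d : ℕ) (i : Fin d) : U d i := ⟨0, rfl⟩

/-- Translation `x ↦ x + ε e_j` on `U_i` (junk value when `j = i`, a case never used below). -/
def shift {d : ℕ} (j : Fin d) (ε : ℤ) {i : Fin d} (x : U d i) : U d i :=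
  if h : j = i then x else
    ⟨fun k => x.1 k + ε * e d j k, by
      have hij : ¬ i = j := fun hh => h hh.symm
      simp [e, hij, x.2]⟩

/-- The translation `τ_i^{ε}` (`ε = ±1`) of the environment:
`(τ_i^{ε}ω)(j,x) = ω(j, x + ε e_i)` for `j ≠ i` and `(τ_i^{ε}ω)(i,x) = ω(i,x)`. -/
def tau {d : ℕ} (i : Fin d) (ε : ℤ) (ω : Env d) : Env d :=
  fun q => ω ⟨q.1, shift i ε q.2⟩

/-- `μ` is the product over all lines `(i,x)` of the uniform measure on `{−1,1}`:
every cylinder set gets its product probability.  This uniquely characterises `π`. -/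
def IsEnvMeasure {d : ℕ} (μ : Measure (Env d)) : Prop :=
  ∀ (s : Finset (Idx d)) (a : Env d),
    μ {ω | ∀ q ∈ s, ω q = a q} = (2 : ENNReal)⁻¹ ^ s.card

/-- The generator `G` of the environment seen from the walker. -/
def G {d : ℕ} (f : Env d → ℝ) (ω : Env d) : ℝ :=
  ∑ i : Fin d, ((1 + chi ω (o d i)) / 2 * f (tau i 1 ω)
    + (1 - chi ω (o d i)) / 2 * f (tau i (-1) ω) - f ω)

/-- The adjoint `G*` of `G`. -/
def Gstar {d : ℕ} (f : Env d → ℝ) (ω : Env d) : ℝ :=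
  ∑ i : Fin d, ((1 - chi ω (o d i)) / 2 * f (tau i 1 ω)
    + (1 + chi ω (o d i)) / 2 * f (tau i (-1) ω) - f ω)

/-- The symmetric part `S = (G + G*)/2`. -/
def S {d : ℕ} (f : Env d → ℝ) (ω : Env d) : ℝ :=
  (1 / 2) * ∑ i : Fin d, (f (tau i 1 ω) + f (tau i (-1) ω) - 2 * f ω)

/-- The antisymmetric part `A = (G − G*)/2`. -/
def A {d : ℕ} (f : Env d → ℝ) (ω : Env d) : ℝ :=
  ∑ i : Fin d, chi ω (o d i) * (f (tau i 1 ω) - f (tau i (-1) ω))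

/-- Fourier transform `û(p) = Σ_{x ∈ U_i} e^{𝐢 p·x} u(x)` of `u : U_i → ℝ` extended by `0`. -/
def uhat {d : ℕ} {i : Fin d} (u : U d i → ℝ) (p : Fin d → ℝ) : ℂ :=
  ∑' x : U d i, Complex.exp (Complex.I * (∑ j, p j * ((x.1 j : ℤ) : ℝ))) * (u x : ℂ)

/-- Fourier transform of a two-variable function `v : U_i × U_j → ℝ` extended by `0`. -/
def vhat {d : ℕ} {i j : Fin d} (v : U d i → U d j → ℝ) (p q : Fin d → ℝ) : ℂ :=
  ∑' z : U d i × U d j,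
    Complex.exp (Complex.I * ((∑ k, p k * ((z.1.1 k : ℤ) : ℝ)) + ∑ k, q k * ((z.2.1 k : ℤ) : ℝ)))
      * (v z.1 z.2 : ℂ)

/-- `d̂(p) = Σ_j 4 sin²(p_j/2)`. -/
def dhat {d : ℕ} (p : Fin d → ℝ) : ℝ := ∑ j, 4 * Real.sin (p j / 2) ^ 2

/-- The fundamental domain `[0,2π)^d` of the torus `𝕋^d`. -/
def box (d : ℕ) : Set (Fin d → ℝ) := Set.univ.pi fun _ => Set.Ico 0 (2 * Real.pi)

/-- Translation by `ε e_k` as a permutation of `U_i` (the identity when `k = i`). -/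
def shiftEquiv {d : ℕ} (k : Fin d) (ε : ℤ) (i : Fin d) : U d i ≃ U d i where
  toFun := shift k ε
  invFun := shift k (-ε)
  left_inv x := by
    by_cases h : k = i
    · simp [shift, h]
    · ext l; simp [shift, h]
  right_inv x := by
    by_cases h : k = i
    · simp [shift, h]
    · ext l; simp [shift, h]

/-- Simultaneous translation by `ε e_k` of both coordinates of `U_i × U_j`. -/
def pairShift {d : ℕ} (k : Fin d) (ε : ℤ) (i j : Fin d) : U d i × U d j ≃ U d i × U d j :=
  (shiftEquiv k ε i).prodCongr (shiftEquiv k ε j)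

lemma pairShift_apply {d : ℕ} (k : Fin d) (ε : ℤ) {i j : Fin d} (z : U d i × U d j) :
    pairShift k ε i j z = (shift k ε z.1, shift k ε z.2) := rfl

lemma pairShift_symm {d : ℕ} (k : Fin d) (ε : ℤ) (i j : Fin d) :
    (pairShift k ε i j).symm = pairShift k (-ε) i j :=
  Equiv.ext fun _ => rfl

lemma sum_mul_shift {d : ℕ} (k : Fin d) (ε : ℤ) {i : Fin d} (p : Fin d → ℝ) (x : U d i) :
    ∑ l, p l * (((shift k ε x).1 l : ℤ) : ℝ)
      = ∑ l, p l * ((x.1 l : ℤ) : ℝ) + ε * Function.update p i 0 k := by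
  by_cases h : k = i
  · simp [shift, h]
  · simp [shift, h, e, mul_add, Finset.sum_add_distrib, mul_comm]

/-- The lattice second difference in the direction of the simultaneous translations. -/
def pairLaplacian {d : ℕ} {i j : Fin d} (w : U d i × U d j → ℝ) (z : U d i × U d j) : ℝ :=
  (1 / 2) * ∑ k, (w (pairShift k (-1) i j z) + w (pairShift k 1 i j z) - 2 * w z)

lemma summable_pairLaplacian {d : ℕ} {i j : Fin d} {w : U d i × U d j → ℝ} (hw : Summable w) :
    Summable (pairLaplacian w) := by
  refine Summable.mul_left _ (summable_sum fun k _ => ?_)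
  exact ((((pairShift k (-1) i j).summable_iff).2 hw).add
    (((pairShift k 1 i j).summable_iff).2 hw)).sub (hw.mul_left 2)

lemma summable_kernel_mul {α 𝕜 : Type*} [RCLike 𝕜] {w : α → ℝ} (hw : Summable w)
    {K : α → 𝕜} (hK : ∀ a, ‖K a‖ ≤ 1) : Summable fun a => K a * (w a : 𝕜) := by
  refine Summable.of_norm_bounded hw.norm fun a => ?_
  rw [norm_mul, RCLike.norm_ofReal, Real.norm_eq_abs]
  exact mul_le_of_le_one_left (abs_nonneg _) (hK a)

/-- Summation by parts: the second difference moves onto a bounded kernel. -/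
lemma tsum_kernel_mul_pairLaplacian {d : ℕ} {i j : Fin d} {𝕜 : Type*} [RCLike 𝕜]
    {w : U d i × U d j → ℝ} (hw : Summable w) {K : U d i × U d j → 𝕜} (hK : ∀ z, ‖K z‖ ≤ 1) :
    ∑' z, K z * (pairLaplacian w z : 𝕜)
      = (1 / 2) * ∑ k, (∑' z, K (pairShift k 1 i j z) * (w z : 𝕜)
          + ∑' z, K (pairShift k (-1) i j z) * (w z : 𝕜) - 2 * ∑' z, K z * (w z : 𝕜)) := by
  have hshift (k : Fin d) (ε : ℤ) : HasSum (fun z => K z * (w (pairShift k (-ε) i j z) : 𝕜))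
      (∑' z, K (pairShift k ε i j z) * (w z : 𝕜)) := by
    have h := (summable_kernel_mul hw fun z => hK (pairShift k ε i j z)).hasSum
    rw [← (pairShift k ε i j).symm.hasSum_iff] at h
    simpa only [Function.comp_def, Equiv.apply_symm_apply, ← pairShift_symm] using h
  have hsum : HasSum (fun z => K z * (pairLaplacian w z : 𝕜))
      ((1 / 2) * ∑ k, (∑' z, K (pairShift k 1 i j z) * (w z : 𝕜)
        + ∑' z, K (pairShift k (-1) i j z) * (w z : 𝕜) - 2 * ∑' z, K z * (w z : 𝕜))) := by
    have h := (hasSum_sum (s := Finset.univ) fun k _ => ((hshift k 1).add (hshift k (-1))).sub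
      ((summable_kernel_mul hw hK).hasSum.mul_left 2)).mul_left (1 / 2 : 𝕜)
    refine h.congr_fun fun z => ?_
    simp only [pairLaplacian, neg_neg]
    push_cast
    rw [mul_left_comm, Finset.mul_sum]
    congr 1
    exact Finset.sum_congr rfl fun k _ => by ring
  exact hsum.tsum_eq

/-- The character of `U_i × U_j` with frequencies `p, q`. -/
def pairChar {d : ℕ} {i j : Fin d} (p q : Fin d → ℝ) (z : U d i × U d j) : ℂ :=
  Complex.exp (Complex.I * ((∑ k, p k * ((z.1.1 k : ℤ) : ℝ)) + ∑ k, q k * ((z.2.1 k : ℤ) : ℝ)))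

lemma pairChar_eq_exp_ofReal_mul_I {d : ℕ} {i j : Fin d} (p q : Fin d → ℝ) (z : U d i × U d j) :
    pairChar p q z = Complex.exp (((∑ k, p k * ((z.1.1 k : ℤ) : ℝ)
      + ∑ k, q k * ((z.2.1 k : ℤ) : ℝ) : ℝ) : ℂ) * Complex.I) := by
  rw [pairChar, mul_comm]
  push_cast
  rfl

lemma norm_pairChar {d : ℕ} {i j : Fin d} (p q : Fin d → ℝ) (z : U d i × U d j) :
    ‖pairChar p q z‖ = 1 := by
  rw [pairChar_eq_exp_ofReal_mul_I, Complex.norm_exp_ofReal_mul_I]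

lemma pairChar_pairShift {d : ℕ} (k : Fin d) (ε : ℤ) {i j : Fin d} (p q : Fin d → ℝ)
    (z : U d i × U d j) :
    pairChar p q (pairShift k ε i j z)
      = Complex.exp (((ε * (Function.update p i 0 + Function.update q j 0) k : ℝ) : ℂ) * Complex.I)
          * pairChar p q z := by
  rw [pairChar_eq_exp_ofReal_mul_I, pairChar_eq_exp_ofReal_mul_I, ← Complex.exp_add, ← add_mul,
    ← Complex.ofReal_add, pairShift_apply, sum_mul_shift, sum_mul_shift, Pi.add_apply]
  congr 3
  ring

lemma vhat_eq_tsum_pairChar {d : ℕ} {i j : Fin d} (v : U d i → U d j → ℝ) (p q : Fin d → ℝ) :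
    vhat v p q = ∑' z : U d i × U d j, pairChar p q z * (v z.1 z.2 : ℂ) := rfl

lemma exp_add_exp_neg_sub_two (t : ℝ) :
    Complex.exp ((t : ℂ) * Complex.I) + Complex.exp (((-t : ℝ) : ℂ) * Complex.I) - 2
      = -((4 * Real.sin (t / 2) ^ 2 : ℝ) : ℂ) := by
  have h : Real.cos t = 1 - 2 * Real.sin (t / 2) ^ 2 := by
    have h1 := Real.cos_two_mul (t / 2)
    rw [mul_div_cancel₀ t two_ne_zero] at h1
    linarith [Real.sin_sq_add_cos_sq (t / 2)]
  have h2 : Complex.exp ((t : ℂ) * Complex.I) + Complex.exp (((-t : ℝ) : ℂ) * Complex.I)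
      = ((2 * Real.cos t : ℝ) : ℂ) := by
    push_cast
    rw [Complex.two_cos]
  rw [h2, h]
  push_cast
  ring

lemma tsum_pairChar_mul_pairLaplacian {d : ℕ} {i j : Fin d} {v : U d i → U d j → ℝ}
    (hv : Summable fun z : U d i × U d j => v z.1 z.2) (p q : Fin d → ℝ) :
    ∑' z, pairChar p q z * (pairLaplacian (fun z : U d i × U d j => v z.1 z.2) z : ℂ)
      = -(1 / 2 : ℂ) * ((dhat (Function.update p i 0 + Function.update q j 0) : ℝ) : ℂ)
          * vhat v p q := by
  have h := tsum_kernel_mul_pairLaplacian hv fun z => (norm_pairChar p q z).le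
  simp only [RCLike.ofReal_eq_complex_ofReal] at h
  rw [h]
  simp only [pairChar_pairShift, mul_assoc, tsum_mul_left, ← vhat_eq_tsum_pairChar, ← add_mul,
    ← sub_mul, ← Finset.sum_mul, dhat]
  simp only [Int.cast_one, Int.cast_neg, one_mul, neg_mul, exp_add_exp_neg_sub_two,
    Finset.sum_neg_distrib]
  push_cast
  ring

section Torus

attribute [local instance] instMeasureSpaceUnitAddCircle

local instance : IsProbabilityMeasure (volume : Measure UnitAddCircle) :=
  inferInstanceAs (IsProbabilityMeasure AddCircle.haarAddCircle)

/-- An absolutely convergent trigonometric series with distinct frequencies that vanishes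
identically has vanishing coefficients. -/
lemma eq_zero_of_tsum_mFourier_eq_zero {ι α : Type*} [Fintype ι] {n : α → ι → ℤ}
    (hn : Function.Injective n) {w : α → ℂ} (hw : Summable w)
    (h : ∀ x : UnitAddTorus ι, ∑' a, w a * UnitAddTorus.mFourier (n a) x = 0) : w = 0 := by
  have hsum : Summable fun a => w a • UnitAddTorus.mFourier (n a) := by
    refine Summable.of_norm_bounded hw.norm fun a => ?_
    rw [norm_smul, UnitAddTorus.mFourier_norm, mul_one]
  have hzero : HasSum (fun a => w a • UnitAddTorus.mFourier (n a)) 0 := by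
    convert hsum.hasSum
    ext x
    rw [← ContinuousMap.tsum_apply hsum]
    exact (h x).symm
  funext b
  let φ : C(UnitAddTorus ι, ℂ) →L[ℂ] ℂ := (innerSL ℂ (UnitAddTorus.mFourierLp 2 (n b))).comp
    (ContinuousMap.toLp (E := ℂ) 2 volume ℂ)
  have hφ_ne (a : α) (hab : a ≠ b) : φ (UnitAddTorus.mFourier (n a)) = 0 :=
    UnitAddTorus.orthonormal_mFourier.2 (hn.ne hab.symm)
  have hφ_self : φ (UnitAddTorus.mFourier (n b)) = 1 := by
    change inner ℂ (UnitAddTorus.mFourierLp 2 (n b)) (UnitAddTorus.mFourierLp 2 (n b)) = 1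
    rw [inner_self_eq_norm_sq_to_K, UnitAddTorus.orthonormal_mFourier.1]
    simp
  have hφ := φ.hasSum hzero
  have hone := hasSum_single b (f := fun a => φ (w a • UnitAddTorus.mFourier (n a))) fun a hab => by
    rw [map_smul, hφ_ne a hab, smul_zero]
  have heq := hone.unique hφ
  rwa [map_smul, hφ_self, map_zero, smul_eq_mul, mul_one] at heq

end Torus

/-- A summable function on `U_i × U_j` with vanishing Fourier transform is zero. -/
lemma eq_zero_of_tsum_pairChar_eq_zero {d : ℕ} {i j : Fin d} {w : U d i × U d j → ℝ}
    (hw : Summable w) (h : ∀ p q, ∑' z, pairChar p q z * (w z : ℂ) = 0) : w = 0 := by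
  have hn : Function.Injective fun z : U d i × U d j => Sum.elim z.1.1 z.2.1 := by
    intro y z hyz
    have h1 := congrArg (fun f => f ∘ Sum.inl) hyz
    have h2 := congrArg (fun f => f ∘ Sum.inr) hyz
    exact Prod.ext (Subtype.ext h1) (Subtype.ext h2)
  have hzero := eq_zero_of_tsum_mFourier_eq_zero hn (w := fun z => (w z : ℂ))
    (Complex.hasSum_ofReal.2 hw.hasSum).summable fun x => by
      choose t ht using fun k => QuotientAddGroup.mk_surjective (x k)
      obtain rfl : (fun k => ((t k : ℝ) : UnitAddCircle)) = x := funext ht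
      rw [← h (fun k => 2 * Real.pi * t (Sum.inl k)) fun k => 2 * Real.pi * t (Sum.inr k)]
      refine tsum_congr fun z => ?_
      rw [mul_comm]
      congr 1
      simp only [UnitAddTorus.mFourier, ContinuousMap.coe_mk, fourier_coe_apply, pairChar,
        Fintype.prod_sum_type, Sum.elim_inl, Sum.elim_inr, ← Complex.exp_sum, ← Complex.exp_add]
      congr 1
      push_cast
      rw [mul_add, Finset.mul_sum, Finset.mul_sum]
      congr 1 <;> exact Finset.sum_congr rfl fun k _ => by ring
  funext z
  exact Complex.ofReal_eq_zero.1 (congrFun hzero z)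

lemma chi_tau {d : ℕ} (k : Fin d) (ε : ℤ) (ω : Env d) {i : Fin d} (x : U d i) :
    chi (tau k ε ω) x = chi ω (shift k ε x) := rfl

lemma abs_chi {d : ℕ} (ω : Env d) {i : Fin d} (x : U d i) : |chi ω x| = 1 := by
  rcases Int.units_eq_one_or (ω ⟨i, x⟩) with h | h <;> simp [chi, h]

/-- For `i ≠ j`, summable `v : U_i × U_j → ℝ` and
`ζ(ω) = Σ_{x,y} v(x,y) ω(i,x) ω(j,y)`, one has `Sζ = Σ_{x,y} v*(x,y) ω(i,x) ω(j,y)` in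
`L²(Ω,π)`, where `v*` is the square-summable function whose Fourier transform satisfies
`v̂*(p,q) = −(1/2) d̂(p^{(i)} + q^{(j)}) v̂(p,q)` for all `p, q ∈ 𝕋^d`. -/
theorem stmt7 (d : ℕ) (hd : 2 ≤ d) (μ : Measure (Env d)) (hμ : IsEnvMeasure μ)
    (i j : Fin d) (hij : i ≠ j) (v : U d i → U d j → ℝ)
    (hv : Summable fun z : U d i × U d j => v z.1 z.2)
    (ζ : Env d → ℝ) (hζdef : ∀ ω, ζ ω = ∑' z : U d i × U d j, v z.1 z.2 * chi ω z.1 * chi ω z.2)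
    (vstar : U d i → U d j → ℝ)
    (hvstar_sq : Summable fun z : U d i × U d j => (vstar z.1 z.2) ^ 2)
    (hvstar_sum : Summable fun z : U d i × U d j => vstar z.1 z.2)
    (hft : ∀ p q : Fin d → ℝ,
      vhat vstar p q
        = -(1 / 2 : ℂ) * ((dhat (Function.update p i 0 + Function.update q j 0) : ℝ) : ℂ)
            * vhat v p q) :
    S ζ =ᵐ[μ] fun ω => ∑' z : U d i × U d j, vstar z.1 z.2 * chi ω z.1 * chi ω z.2 := by
  have hlap : (fun z : U d i × U d j => vstar z.1 z.2)
      = pairLaplacian fun z : U d i × U d j => v z.1 z.2 := by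
    rw [← sub_eq_zero]
    refine eq_zero_of_tsum_pairChar_eq_zero
      (hvstar_sum.sub (summable_pairLaplacian hv)) fun p q => ?_
    have hs := summable_kernel_mul hvstar_sum fun z => (norm_pairChar p q z).le
    have hl := summable_kernel_mul (summable_pairLaplacian hv) fun z => (norm_pairChar p q z).le
    have hsub := hs.tsum_sub hl
    simp only [RCLike.ofReal_eq_complex_ofReal] at hsub
    rw [tsum_pairChar_mul_pairLaplacian hv, ← vhat_eq_tsum_pairChar, hft, sub_self] at hsub
    simpa only [Pi.sub_apply, Complex.ofReal_sub, mul_sub] using hsub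
  refine Eventually.of_forall fun ω => ?_
  have hK (z : U d i × U d j) : ‖chi ω z.1 * chi ω z.2‖ ≤ 1 := by
    rw [Real.norm_eq_abs, abs_mul, abs_chi, abs_chi, one_mul]
  have h := tsum_kernel_mul_pairLaplacian hv hK
  rw [← hlap] at h
  simp only [RCLike.ofReal_real_eq_id, id, pairShift_apply] at h
  simp only [S, hζdef, chi_tau]
  simpa only [mul_comm, mul_left_comm, mul_assoc] using h.symm

end RWOML
end
end

section
/- There exist C' > 0 and λ₀ ∈ (0, 1/3] such that for all 0 < λ < λ₀, ∫_0^π ∫_0^π (λ + x² + y² + x² |log(λ + x²)|)^{−1} dx dy ≥ C' (log(λ^{−1}))^{1/2}. -/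
open MeasureTheory Real Filter Topology Finset

noncomputable section

namespace RWOML

/-- The denominator of the integrand of `stmt19`. -/
def denom (lam x y : ℝ) : ℝ := lam + x ^ 2 + y ^ 2 + x ^ 2 * |Real.log (lam + x ^ 2)|

lemma denom_pos {lam : ℝ} (hlam : 0 < lam) (x y : ℝ) : 0 < denom lam x y := by
  unfold denom
  positivity

lemma continuous_denom_inv {lam : ℝ} (hlam : 0 < lam) :
    Continuous (Function.uncurry fun x y => (denom lam x y)⁻¹) := by
  have hlog : Continuous fun p : ℝ × ℝ => Real.log (lam + p.1 ^ 2) :=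
    Continuous.log (by fun_prop) fun p => by positivity
  have hden : Continuous fun p : ℝ × ℝ => denom lam p.1 p.2 := by
    unfold denom
    fun_prop
  exact hden.inv₀ fun p => (denom_pos hlam p.1 p.2).ne'

/-- On the region `λ ≤ x²`, `λ + x² ≤ 1`, `y² ≤ L x²`, where `L = log λ⁻¹ ≥ 2`, the denominator is
at most `3 L x²`. -/
lemma denom_le {lam x y : ℝ} (hlam : 0 < lam) (hL : 2 ≤ Real.log lam⁻¹) (hx : lam ≤ x ^ 2)
    (hx1 : lam + x ^ 2 ≤ 1) (hy : y ^ 2 ≤ Real.log lam⁻¹ * x ^ 2) :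
    denom lam x y ≤ 3 * Real.log lam⁻¹ * x ^ 2 := by
  have hlog : |Real.log (lam + x ^ 2)| ≤ Real.log lam⁻¹ := by
    rw [abs_of_nonpos (Real.log_nonpos (by positivity) hx1), Real.log_inv]
    exact neg_le_neg (Real.log_le_log hlam (by nlinarith [sq_nonneg x]))
  have hmul := mul_le_mul_of_nonneg_left hlog (sq_nonneg x)
  have htwo := mul_le_mul_of_nonneg_right hL (sq_nonneg x)
  unfold denom
  linarith

/-- Restricting an integral of a nonnegative continuous function to a subinterval, and bounding the
integrand below there, bounds the integral below. -/
lemma integral_le_integral_of_subinterval {f g : ℝ → ℝ} {a b c d : ℝ} (hg : Continuous g)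
    (hg0 : ∀ x, 0 ≤ g x) (hf : IntervalIntegrable f volume c d) (hac : a ≤ c) (hcd : c ≤ d)
    (hdb : d ≤ b) (hfg : ∀ x ∈ Set.Icc c d, f x ≤ g x) :
    ∫ x in c..d, f x ≤ ∫ x in a..b, g x :=
  (intervalIntegral.integral_mono_on hcd hf (hg.intervalIntegrable _ _) hfg).trans
    (intervalIntegral.integral_mono_interval hac hcd hdb
      (Eventually.of_forall hg0) (hg.intervalIntegrable _ _))

lemma inner_integral_ge {lam x : ℝ} (hlam : 0 < lam) (hL : 2 ≤ Real.log lam⁻¹) (hx0 : 0 < x)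
    (hx : lam ≤ x ^ 2) (hx1 : lam + x ^ 2 ≤ 1) (hxL : √(Real.log lam⁻¹) * x ≤ 1) :
    (3 * √(Real.log lam⁻¹))⁻¹ * x⁻¹ ≤ ∫ y in (0 : ℝ)..π, (denom lam x y)⁻¹ := by
  set L := Real.log lam⁻¹
  have hL0 : 0 < L := by linarith
  have hs : 0 < √L := Real.sqrt_pos.2 hL0
  have hsq : √L ^ 2 = L := Real.sq_sqrt hL0.le
  calc (3 * √L)⁻¹ * x⁻¹ = ∫ _ in (0 : ℝ)..(√L * x), (3 * L * x ^ 2)⁻¹ := by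
        rw [intervalIntegral.integral_const, smul_eq_mul, sub_zero, ← hsq, Real.sqrt_sq hs.le]
        field_simp
    _ ≤ ∫ y in (0 : ℝ)..π, (denom lam x y)⁻¹ := by
        refine integral_le_integral_of_subinterval
          ((continuous_denom_inv hlam).comp (Continuous.prodMk_right x))
          (fun y => (inv_pos.2 (denom_pos hlam x y)).le) intervalIntegrable_const le_rfl
          (by positivity) (by linarith [Real.pi_gt_three]) fun y hy => ?_
        refine inv_anti₀ (denom_pos hlam x y) (denom_le hlam hL hx hx1 ?_)
        calc y ^ 2 ≤ (√L * x) ^ 2 := pow_le_pow_left₀ hy.1 hy.2 2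
          _ = L * x ^ 2 := by rw [mul_pow, hsq]

lemma log_le_half {L : ℝ} (hL : 0 < L) : Real.log L ≤ L / 2 := by
  have h := Real.log_le_sub_one_of_pos (Real.sqrt_pos.2 hL)
  rw [Real.log_sqrt hL.le] at h
  nlinarith [sq_nonneg (√L - 2), Real.sq_sqrt hL.le]

/-- There are `C' > 0` and `λ₀ ∈ (0,1/3]` such that for all `0 < λ < λ₀`,
`∫_0^π ∫_0^π (λ + x² + y² + x²|log(λ+x²)|)^{−1} dx dy ≥ C' (log(λ^{−1}))^{1/2}`. -/
theorem stmt19 :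
    ∃ C' > (0 : ℝ), ∃ lam₀ : ℝ, 0 < lam₀ ∧ lam₀ ≤ 1 / 3 ∧
      ∀ lam : ℝ, 0 < lam → lam < lam₀ →
        C' * Real.sqrt (Real.log lam⁻¹) ≤
          ∫ x in (0 : ℝ)..Real.pi, ∫ y in (0 : ℝ)..Real.pi,
            (lam + x ^ 2 + y ^ 2 + x ^ 2 * |Real.log (lam + x ^ 2)|)⁻¹ := by
  refine ⟨1 / 12, by norm_num, Real.exp (-4), Real.exp_pos _, ?_, fun lam hlam hlt => ?_⟩
  · rw [Real.exp_neg, ← one_div]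
    exact one_div_le_one_div_of_le (by norm_num) (by linarith [Real.add_one_le_exp (4 : ℝ)])
  have hL4 : 4 < Real.log lam⁻¹ := by
    rw [Real.log_inv, lt_neg]
    exact (Real.log_lt_iff_lt_exp hlam).2 hlt
  set L := Real.log lam⁻¹ with hLdef
  have hL0 : 0 < L := by linarith
  have hs : 0 < √L := Real.sqrt_pos.2 hL0
  have hsq : √L ^ 2 = L := Real.sq_sqrt hL0.le
  have hr : 0 < √lam := Real.sqrt_pos.2 hlam
  have hLlam : L * lam ≤ 1 := by
    have h := Real.log_le_sub_one_of_pos (inv_pos.2 hlam)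
    calc L * lam ≤ lam⁻¹ * lam := by gcongr; linarith
      _ = 1 := inv_mul_cancel₀ hlam.ne'
  have hlam4 : lam ≤ 1 / 4 := by nlinarith
  have hle : √lam ≤ (√L)⁻¹ := by
    rw [← Real.sqrt_inv]
    exact Real.sqrt_le_sqrt ((le_inv_mul_iff₀ hL0).2 hLlam |>.trans_eq (mul_one _))
  have hs2 : 2 ≤ √L := Real.le_sqrt_of_sq_le (by linarith)
  have hsinv : (√L)⁻¹ ≤ 1 / 2 := by
    rw [← one_div]
    exact one_div_le_one_div_of_le (by norm_num) hs2
  calc 1 / 12 * √L = (3 * √L)⁻¹ * (L / 4) := by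
        rw [← hsq, Real.sqrt_sq hs.le]
        field_simp
        norm_num
    _ ≤ (3 * √L)⁻¹ * Real.log ((√L)⁻¹ / √lam) := by
        gcongr
        rw [Real.log_div (by positivity) hr.ne', Real.log_inv, Real.log_sqrt hL0.le,
          Real.log_sqrt hlam.le]
        have hlog : Real.log lam = -L := by rw [hLdef, Real.log_inv, neg_neg]
        linarith [log_le_half hL0]
    _ = ∫ x in √lam..(√L)⁻¹, (3 * √L)⁻¹ * x⁻¹ := by
        rw [intervalIntegral.integral_const_mul, integral_inv_of_pos hr (by positivity)]
    _ ≤ ∫ x in (0 : ℝ)..π, ∫ y in (0 : ℝ)..π, (denom lam x y)⁻¹ := by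
        refine integral_le_integral_of_subinterval
          (intervalIntegral.continuous_parametric_intervalIntegral_of_continuous'
            (continuous_denom_inv hlam) 0 π)
          (fun x => intervalIntegral.integral_nonneg Real.pi_pos.le
            fun y _ => (inv_pos.2 (denom_pos hlam x y)).le)
          ?_ hr.le hle (by linarith [Real.pi_gt_three]) fun x hx => ?_
        · refine (intervalIntegral.intervalIntegrable_inv (fun x hx => ?_)
            continuousOn_id).const_mul _
          rw [Set.uIcc_of_le hle] at hx
          exact (hr.trans_le hx.1).ne'
        · have hx0 : 0 < x := hr.trans_le hx.1
          refine inner_integral_ge hlam (by linarith) hx0 ((Real.sqrt_le_left hx0.le).1 hx.1) ?_ ?_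
          · nlinarith [hx.2]
          · calc √L * x ≤ √L * (√L)⁻¹ := by gcongr; exact hx.2
              _ = 1 := mul_inv_cancel₀ hs.ne'

end RWOML
end
end
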